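/- arXiv:1411.2724 — 6 statements merged into one kernel-verified Lean document; each statement's English description precedes it below -/
import Mathlib

section
/- Let η, P, A, B, σ², σa², σb², R, R_N be positive real numbers with R ≤ R_N, and let n be a positive integer. Then the function J(λ) = η·P·B·λ·(R_N − R·λ) / [η·A·(λ·σa² + σb²)·(R_N − R·λ) + σ²·(R·λ + n·σb²)] is concave on the interval [0,1]. (Lemma 1: with a given antenna set, the received SNR is a concave function of the power splitting ratio λ.) -/
/-!
Put `x = λ` and `y = RN - R * λ`. Since `y + R * x = RN`, the constant term of the denominator is
a combination of `x` and `y`, and `J` becomes `c * (x * y / (a * x * y + b * y + d * x))` with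
`a`, `b`, `d` positive. For `x, y > 0` the quotient is `1 / (a + b / x + d / y)`, which by
Cauchy-Schwarz is the minimum over `p + q + r = 1` of the affine functions
`p ^ 2 / a + q ^ 2 * x / b + r ^ 2 * y / d`, hence concave. The lemma `quotient_le_tangent` is this
affine upper bound with the weights optimal at `(x₀, y₀)`, cleared of divisions so that it also
covers the endpoint `x = 0` and the case `y = 0`.
-/

/-- The affine function on the right is the tangent plane at `(x₀, y₀)` of the quotient on the
left: it takes the value `x₀ * y₀ / (a * x₀ * y₀ + b * y₀ + d * x₀)` there. -/
lemma quotient_le_tangent {a b d x y x₀ y₀ : ℝ} (ha : 0 < a) (hb : 0 < b) (hd : 0 < d)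
    (hx : 0 ≤ x) (hy : 0 ≤ y) (hD : 0 < a * x * y + b * y + d * x)
    (hD₀ : 0 < a * x₀ * y₀ + b * y₀ + d * x₀) :
    x * y / (a * x * y + b * y + d * x) ≤
      (a * x₀ ^ 2 * y₀ ^ 2 + b * y₀ ^ 2 * x + d * x₀ ^ 2 * y) /
        (a * x₀ * y₀ + b * y₀ + d * x₀) ^ 2 := by
  rw [div_le_div_iff₀ hD (by positivity)]
  -- The defect in the Cauchy-Schwarz inequality, as a sum of squares (Lagrange's identity).
  have h : 0 ≤ a * b * (y * y₀ ^ 2 * (x - x₀) ^ 2) + a * d * (x * x₀ ^ 2 * (y - y₀) ^ 2)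
      + b * d * (y * x₀ - x * y₀) ^ 2 := by positivity
  linarith

/-- Along the segment `y = N - R * x` the quotient is concave on `[0, 1]`. -/
lemma concaveOn_quotient {a b d R N : ℝ} (ha : 0 < a) (hb : 0 < b) (hd : 0 < d)
    (hN : 0 < N) (hRN : R ≤ N) :
    ConcaveOn ℝ (Set.Icc (0 : ℝ) 1)
      (fun x : ℝ => x * (N - R * x) / (a * x * (N - R * x) + b * (N - R * x) + d * x)) := by
  have hy : ∀ x ∈ Set.Icc (0 : ℝ) 1, 0 ≤ N - R * x := by
    rintro x ⟨h0, h1⟩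
    nlinarith
  have hD : ∀ x ∈ Set.Icc (0 : ℝ) 1,
      0 < a * x * (N - R * x) + b * (N - R * x) + d * x := by
    intro x hx
    have hyx := hy x hx
    rcases hx.1.eq_or_lt with rfl | h
    · simpa using mul_pos hb hN
    · positivity
  refine ⟨convex_Icc 0 1, fun u hu v hv s t hs ht hst => ?_⟩
  have hz := convex_Icc (0 : ℝ) 1 hu hv hs ht hst
  have hu' := quotient_le_tangent ha hb hd hu.1 (hy u hu) (hD u hu) (hD _ hz)
  have hv' := quotient_le_tangent ha hb hd hv.1 (hy v hv) (hD v hv) (hD _ hz)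
  have hDz := hD _ hz
  simp only [smul_eq_mul] at hu' hv' hDz ⊢
  refine (add_le_add (mul_le_mul_of_nonneg_left hu' hs)
    (mul_le_mul_of_nonneg_left hv' ht)).trans (le_of_eq ?_)
  obtain rfl : t = 1 - s := by linarith
  rw [← mul_div_assoc, ← mul_div_assoc, ← add_div,
    div_eq_div_iff (pow_pos hDz 2).ne' hDz.ne']
  ring

/-- Lemma 1: with a given antenna set, the received SNR
`J(λ) = η·P·B·λ·(R_N − R·λ) / [η·A·(λ·σa² + σb²)·(R_N − R·λ) + σ²·(R·λ + n·σb²)]`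
is a concave function of the power splitting ratio `λ` on `[0,1]`. -/
theorem snr_concaveOn
    (η P A B σ2 σa2 σb2 R RN : ℝ) (n : ℕ)
    (hη : 0 < η) (hP : 0 < P) (hA : 0 < A) (hB : 0 < B)
    (hσ2 : 0 < σ2) (hσa2 : 0 < σa2) (hσb2 : 0 < σb2)
    (hR : 0 < R) (hRN : 0 < RN) (hRle : R ≤ RN) (hn : 0 < n) :
    ConcaveOn ℝ (Set.Icc (0 : ℝ) 1)
      (fun lam : ℝ =>
        η * P * B * lam * (RN - R * lam) /
          (η * A * (lam * σa2 + σb2) * (RN - R * lam) + σ2 * (R * lam + n * σb2))) := by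
  have hn' : (0 : ℝ) < n := Nat.cast_pos.mpr hn
  have h := (concaveOn_quotient (a := η * A * σa2) (b := η * A * σb2 + σ2 * n * σb2 / RN)
    (d := σ2 * R + σ2 * n * σb2 * R / RN) (by positivity) (by positivity) (by positivity)
    hRN hRle).smul (c := η * P * B) (by positivity)
  refine h.congr fun x _ => ?_
  -- The term `σ2 * n * σb2` is split using `1 = ((RN - R * x) + R * x) / RN`.
  have hden : η * A * σa2 * x * (RN - R * x) + (η * A * σb2 + σ2 * n * σb2 / RN) * (RN - R * x)
      + (σ2 * R + σ2 * n * σb2 * R / RN) * x =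
      η * A * (x * σa2 + σb2) * (RN - R * x) + σ2 * (R * x + n * σb2) := by
    field_simp
    ring
  simp only [smul_eq_mul, hden]
  rw [← mul_div_assoc, ← mul_assoc]
end

section
/- Let η, P, A, B, σ², σa², σb², R, R_N be positive real numbers with R ≤ R_N, and let n be a positive integer. Define X = η·σb²·A·R_N + n·σ²·σb², Y = σ²·R_N + n·σ²·σb², D = η·σb²·A − σ², and suppose D ≠ 0 and λ₃ = √X·(√X − √Y)/(R·D) < 1. Then J is monotone nondecreasing on [0, λ₃] and monotone nonincreasing on [λ₃, 1]. -/
/-!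
Write `N` and `Q` for the numerator and the denominator of the SNR. On `[0, 1]` the denominator is
positive, so comparing values at `x` and `y` amounts to finding the sign of `N y * Q x - N x * Q y`.
The terms in `σa2` cancel, and this difference factors as (`snr_cross`)
`RN * (N y * Q x - N x * Q y) = η P B (y - x) (X (RN - R x) (RN - R y) - Y (R x) (R y))`.

Since `X - Y = D * RN`, the point `lam3` is characterised without `D` by
`R * lam3 * (√X + √Y) = √X * RN`. Hence `√Y (R x) ≤ √X (RN - R x)` exactly when `x ≤ lam3`.
Multiplying two such inequalities, for `x` and for `y`, gives the sign of the last factor on either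
side of `lam3`.
-/

/-- Factorisation of the cross-multiplied difference of two SNR values; the last factor is
`X (RN - R x) (RN - R y) - Y (R x) (R y)`. -/
lemma snr_cross (η P A B σ2 σa2 σb2 R RN n x y : ℝ) :
    RN * (η * P * B * y * (RN - R * y) *
          (η * A * (x * σa2 + σb2) * (RN - R * x) + σ2 * (R * x + n * σb2)) -
        η * P * B * x * (RN - R * x) *
          (η * A * (y * σa2 + σb2) * (RN - R * y) + σ2 * (R * y + n * σb2))) =
      η * P * B * (y - x) *
        ((η * σb2 * A * RN + n * σ2 * σb2) * (RN - R * x) * (RN - R * y) -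
          (σ2 * RN + n * σ2 * σb2) * (R * x) * (R * y)) := by
  ring

/-- The defining formula of `lam3`, with the factor `D` cancelled against `X - Y = D * RN`;
here `s`, `r`, `l` stand for `√X`, `√Y`, `lam3`. -/
lemma lam3_mul {s r R RN D l : ℝ} (hR : R ≠ 0) (hD : D ≠ 0)
    (h : s ^ 2 - r ^ 2 = D * RN) (hl : l = s * (s - r) / (R * D)) :
    R * l * (s + r) = s * RN := by
  rw [hl]
  field_simp
  linear_combination s * h

/-- If `λ₃ < 1`, then `J` is monotone nondecreasing on `[0, λ₃]`
and monotone nonincreasing on `[λ₃, 1]`. -/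
theorem snr_monotone_around_lam3
    (η P A B σ2 σa2 σb2 R RN : ℝ) (n : ℕ)
    (hη : 0 < η) (hP : 0 < P) (hA : 0 < A) (hB : 0 < B)
    (hσ2 : 0 < σ2) (hσa2 : 0 < σa2) (hσb2 : 0 < σb2)
    (hR : 0 < R) (hRN : 0 < RN) (hRle : R ≤ RN) (hn : 0 < n)
    (X Y D : ℝ)
    (hX : X = η * σb2 * A * RN + n * σ2 * σb2)
    (hY : Y = σ2 * RN + n * σ2 * σb2)
    (hD : D = η * σb2 * A - σ2) (hDne : D ≠ 0)
    (lam3 : ℝ)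
    (hlam3 : lam3 = Real.sqrt X * (Real.sqrt X - Real.sqrt Y) / (R * D))
    (hlam3lt : lam3 < 1) :
    MonotoneOn
      (fun lam : ℝ =>
        η * P * B * lam * (RN - R * lam) /
          (η * A * (lam * σa2 + σb2) * (RN - R * lam) + σ2 * (R * lam + n * σb2)))
      (Set.Icc (0 : ℝ) lam3) ∧
    AntitoneOn
      (fun lam : ℝ =>
        η * P * B * lam * (RN - R * lam) /
          (η * A * (lam * σa2 + σb2) * (RN - R * lam) + σ2 * (R * lam + n * σb2)))
      (Set.Icc lam3 (1 : ℝ)) := by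
  have hn' : (0 : ℝ) < n := by exact_mod_cast hn
  have hXpos : 0 < X := by rw [hX]; positivity
  have hYpos : 0 < Y := by rw [hY]; positivity
  have hs : 0 < √X := Real.sqrt_pos.2 hXpos
  have hr : 0 < √Y := Real.sqrt_pos.2 hYpos
  have hsX : √X ^ 2 = X := Real.sq_sqrt hXpos.le
  have hrY : √Y ^ 2 = Y := Real.sq_sqrt hYpos.le
  have hl : R * lam3 * (√X + √Y) = √X * RN :=
    lam3_mul hR.ne' hDne (by rw [hsX, hrY, hX, hY, hD]; ring) hlam3
  have hl0 : 0 < lam3 := by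
    have h : 0 < lam3 * (R * (√X + √Y)) := by
      rw [show lam3 * (R * (√X + √Y)) = √X * RN by linear_combination hl]
      positivity
    exact pos_of_mul_pos_left h (by positivity)
  have hu : ∀ x : ℝ, x ≤ 1 → 0 ≤ RN - R * x := fun x hx => by nlinarith
  have hden : ∀ x : ℝ, 0 ≤ x → x ≤ 1 →
      0 < η * A * (x * σa2 + σb2) * (RN - R * x) + σ2 * (R * x + n * σb2) := by
    intro x hx hx1
    have := hu x hx1
    positivity
  have hle : ∀ x : ℝ, x ≤ lam3 → √Y * (R * x) ≤ √X * (RN - R * x) := by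
    intro x hx
    have : x * (R * (√X + √Y)) ≤ lam3 * (R * (√X + √Y)) := by gcongr
    linarith
  have hge : ∀ x : ℝ, lam3 ≤ x → √X * (RN - R * x) ≤ √Y * (R * x) := by
    intro x hx
    have : lam3 * (R * (√X + √Y)) ≤ x * (R * (√X + √Y)) := by gcongr
    linarith
  have hfac : ∀ x y : ℝ, X * (RN - R * x) * (RN - R * y) - Y * (R * x) * (R * y) =
      √X * (RN - R * x) * (√X * (RN - R * y)) - √Y * (R * x) * (√Y * (R * y)) := by
    intro x y
    linear_combination (-(RN - R * x) * (RN - R * y)) * hsX + (R * x) * (R * y) * hrY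
  have hc : 0 < η * P * B := by positivity
  constructor
  · rintro x ⟨hx0, hx⟩ y ⟨hy0, hy⟩ hxy
    have hx1 : x ≤ 1 := hx.trans hlam3lt.le
    have hy1 : y ≤ 1 := hy.trans hlam3lt.le
    have hg : 0 ≤ X * (RN - R * x) * (RN - R * y) - Y * (R * x) * (R * y) := by
      rw [hfac, sub_nonneg]
      exact mul_le_mul (hle x hx) (hle y hy) (by positivity) (mul_nonneg hs.le (hu x hx1))
    have hcross := snr_cross η P A B σ2 σa2 σb2 R RN n x y
    rw [← hX, ← hY] at hcross
    dsimp only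
    rw [div_le_div_iff₀ (hden x hx0 hx1) (hden y hy0 hy1), ← sub_nonneg]
    refine nonneg_of_mul_nonneg_right ?_ hRN
    rw [hcross]
    exact mul_nonneg (mul_nonneg hc.le (sub_nonneg.2 hxy)) hg
  · rintro x ⟨hx, hx1⟩ y ⟨hy, hy1⟩ hxy
    have hx0 : 0 ≤ x := hl0.le.trans hx
    have hy0 : 0 ≤ y := hl0.le.trans hy
    have hg : X * (RN - R * x) * (RN - R * y) - Y * (R * x) * (R * y) ≤ 0 := by
      rw [hfac, sub_nonpos]
      exact mul_le_mul (hge x hx) (hge y hy) (mul_nonneg hs.le (hu y hy1)) (by positivity)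
    have hcross := snr_cross η P A B σ2 σa2 σb2 R RN n x y
    rw [← hX, ← hY] at hcross
    dsimp only
    rw [div_le_div_iff₀ (hden y hy0 hy1) (hden x hx0 hx1), ← sub_nonpos]
    refine nonpos_of_mul_nonpos_right ?_ hRN
    rw [hcross]
    exact mul_nonpos_of_nonneg_of_nonpos (mul_nonneg hc.le (sub_nonneg.2 hxy)) hg
end

section
/- Let η, P, A, B, σ², σa², σb², R, R_N be positive real numbers with R ≤ R_N, and let n be a positive integer. Define X = η·σb²·A·R_N + n·σ²·σb², Y = σ²·R_N + n·σ²·σb², D = η·σb²·A − σ², and suppose D ≠ 0 and λ₃ = √X·(√X − √Y)/(R·D) ≥ 1. Then J is monotone nondecreasing on [0, 1], and hence J attains its maximum over [0,1] at λ = 1. -/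
/-!
Write `u(t) = t (RN - R t)` and `V(t) = X - R D t`. The denominator of `J` equals
`η A σa2 u(t) + V(t)`, so comparing `J(a)` with `J(b)` by cross-multiplication cancels the
`σa2` term and leaves `u(a) V(b) ≤ u(b) V(a)`. The difference factors as
`u(b) V(a) - u(a) V(b) = (b - a) (RN X - R X (a + b) + R² D a b)`.
The last factor is affine in `a` and in `b` separately, hence nonnegative on `[0,1]²` once it is
so at the corners (`snr_factor_nonneg`). The corner `(1,1)` is the decisive one. Because
`X - Y = RN D`, its value times `RN` is `X (RN - R)² - R² Y`, while `λ₃ ≥ 1` reads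
`R (√X + √Y) ≤ RN √X`, that is, `R √Y ≤ (RN - R) √X`.
-/

/-- Rationalising the numerator of `λ₃` with `X - Y = RN D` gives
`λ₃ = √X RN / (R (√X + √Y))`; the sign of `D` thus plays no role in the condition `1 ≤ λ₃`. -/
lemma sqrt_bound_of_one_le_lam3 {X Y D R RN : ℝ} (hR : 0 < R) (hX : 0 < X) (hY : 0 < Y)
    (hD : D ≠ 0) (hXY : X - Y = RN * D)
    (h : 1 ≤ √X * (√X - √Y) / (R * D)) : R * √Y ≤ (RN - R) * √X := by
  have hx : 0 < √X := Real.sqrt_pos.2 hX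
  have hy : 0 < √Y := Real.sqrt_pos.2 hY
  have hx2 : √X * √X = X := Real.mul_self_sqrt hX.le
  have hy2 : √Y * √Y = Y := Real.mul_self_sqrt hY.le
  have key : √X * (√X - √Y) / (R * D) = √X * RN / (R * (√X + √Y)) := by
    rw [div_eq_div_iff (mul_ne_zero hR.ne' hD) (by positivity)]
    linear_combination R * √X * hx2 - R * √X * hy2 + R * √X * hXY
  rw [key, le_div_iff₀ (by positivity)] at h
  linarith

/-- The divided difference of `u(t) / V(t)`, up to a positive denominator, is nonnegative on the
unit square. -/
lemma snr_factor_nonneg {X Y D R RN a b : ℝ} (hR : 0 < R) (hRN : 0 < RN) (hX : 0 < X)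
    (hY : 0 < Y) (hRle : R ≤ RN) (hXY : X - Y = RN * D) (h : R * √Y ≤ (RN - R) * √X)
    (ha : 0 ≤ a) (ha1 : a ≤ 1) (hb : 0 ≤ b) (hb1 : b ≤ 1) :
    0 ≤ RN * X - R * X * (a + b) + R ^ 2 * D * (a * b) := by
  have hsq : (R * √Y) ^ 2 ≤ ((RN - R) * √X) ^ 2 := pow_le_pow_left₀ (by positivity) h 2
  rw [mul_pow, mul_pow, Real.sq_sqrt hX.le, Real.sq_sqrt hY.le] at hsq
  have h11 : 0 ≤ RN * X - 2 * R * X + R ^ 2 * D := by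
    refine nonneg_of_mul_nonneg_right (a := RN) ?_ hRN
    linear_combination hsq + R ^ 2 * hXY
  have h10 : 0 ≤ X * (RN - R) := mul_nonneg hX.le (sub_nonneg.2 hRle)
  have ha' := sub_nonneg.2 ha1
  have hb' := sub_nonneg.2 hb1
  -- A function affine in each variable is the bilinear interpolation of its corner values.
  have e : RN * X - R * X * (a + b) + R ^ 2 * D * (a * b) =
      (1 - a) * (1 - b) * (RN * X) + (a * (1 - b) + (1 - a) * b) * (X * (RN - R))
        + a * b * (RN * X - 2 * R * X + R ^ 2 * D) := by ring
  rw [e]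
  positivity

/-- If `λ₃ ≥ 1`, then `J` is monotone nondecreasing on `[0,1]`, and hence attains
its maximum over `[0,1]` at `λ = 1`. -/
theorem snr_monotone_lam3_ge_one
    (η P A B σ2 σa2 σb2 R RN : ℝ) (n : ℕ)
    (hη : 0 < η) (hP : 0 < P) (hA : 0 < A) (hB : 0 < B)
    (hσ2 : 0 < σ2) (hσa2 : 0 < σa2) (hσb2 : 0 < σb2)
    (hR : 0 < R) (hRN : 0 < RN) (hRle : R ≤ RN) (hn : 0 < n)
    (X Y D : ℝ)
    (hX : X = η * σb2 * A * RN + n * σ2 * σb2)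
    (hY : Y = σ2 * RN + n * σ2 * σb2)
    (hD : D = η * σb2 * A - σ2) (hDne : D ≠ 0)
    (lam3 : ℝ)
    (hlam3 : lam3 = Real.sqrt X * (Real.sqrt X - Real.sqrt Y) / (R * D))
    (hlam3ge : 1 ≤ lam3) :
    MonotoneOn
      (fun lam : ℝ =>
        η * P * B * lam * (RN - R * lam) /
          (η * A * (lam * σa2 + σb2) * (RN - R * lam) + σ2 * (R * lam + n * σb2)))
      (Set.Icc (0 : ℝ) 1) ∧
    ∀ lam ∈ Set.Icc (0 : ℝ) 1,
      η * P * B * lam * (RN - R * lam) /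
          (η * A * (lam * σa2 + σb2) * (RN - R * lam) + σ2 * (R * lam + n * σb2)) ≤
        η * P * B * 1 * (RN - R * 1) /
          (η * A * (1 * σa2 + σb2) * (RN - R * 1) + σ2 * (R * 1 + n * σb2)) := by
  have hn' : (0 : ℝ) < n := Nat.cast_pos.2 hn
  have hX0 : 0 < X := by rw [hX]; positivity
  have hY0 : 0 < Y := by rw [hY]; positivity
  have hXY : X - Y = RN * D := by rw [hX, hY, hD]; ring
  rw [hlam3] at hlam3ge
  have hs := sqrt_bound_of_one_le_lam3 hR hX0 hY0 hDne hXY hlam3ge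
  have hden : ∀ t ∈ Set.Icc (0 : ℝ) 1,
      0 < η * A * (t * σa2 + σb2) * (RN - R * t) + σ2 * (R * t + n * σb2) := by
    rintro t ⟨ht0, ht1⟩
    have : 0 ≤ RN - R * t := by nlinarith
    positivity
  have hmono : MonotoneOn
      (fun lam : ℝ =>
        η * P * B * lam * (RN - R * lam) /
          (η * A * (lam * σa2 + σb2) * (RN - R * lam) + σ2 * (R * lam + n * σb2)))
      (Set.Icc (0 : ℝ) 1) := by
    intro a ha b hb hab
    have hF := snr_factor_nonneg hR hRN hX0 hY0 hRle hXY hs ha.1 ha.2 hb.1 hb.2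
    have hprod : 0 ≤ η * P * B *
        ((b - a) * (RN * X - R * X * (a + b) + R ^ 2 * D * (a * b))) :=
      mul_nonneg (by positivity) (mul_nonneg (sub_nonneg.2 hab) hF)
    rw [hX, hD] at hprod
    simp only
    rw [div_le_div_iff₀ (hden a ha) (hden b hb)]
    linear_combination hprod
  exact ⟨hmono, fun t ht => hmono ht (Set.right_mem_Icc.2 zero_le_one) ht.2⟩
end

section
/- (Theorem 1, case η·σb²·A ≠ σ².) Let η, P, A, B, σ², σa², σb², R, R_N be positive real numbers with R ≤ R_N, and let n be a positive integer. Define X = η·σb²·A·R_N + n·σ²·σb², Y = σ²·R_N + n·σ²·σb², D = η·σb²·A − σ², and suppose D ≠ 0. Then λ* = min{λ₃, 1}, where λ₃ = √X·(√X − √Y)/(R·D), satisfies λ* ∈ [0,1] and J(λ*) ≥ J(λ) for every λ ∈ [0,1]; i.e., λ* is an optimal power splitting ratio. -/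
/-!
Writing `f λ = λ (RN - R λ)` and `g λ = X - R D λ`, the SNR is `K f / (c f + g)` with
`K, c > 0`, so it is enough to maximise `f / g` on `[0, 1]`, where `g` is positive.
Cross-multiplying, `f λ * g μ - f μ * g λ = (λ - μ) * h λ μ` for the symmetric form
`h λ μ = RN X - R X (λ + μ) + R² D λ μ` (`cross_identity`), and `h μ μ` is the numerator of
`(f / g)'` at `μ`. As `X - Y = RN D`, rationalising `λ₃` gives `λ₃ = RN √X / (R (√X + √Y))`,
so `λ₃ > 0`, `g λ₃ = √X √Y > 0` and `h λ₃ λ₃ = 0` (`lam3_facts`). If `λ₃ ≤ 1`, then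
`h λ λ₃ = -(λ - λ₃) R g λ₃`, so `λ₃` is optimal; if `λ₃ > 1`, then `h λ 1 ≥ 0` for `λ ≤ 1`,
so `1` is optimal.
-/

theorem cross_identity (X D R RN l m : ℝ) :
    l * (RN - R * l) * (X - R * D * m) - m * (RN - R * m) * (X - R * D * l) =
      (l - m) * (RN * X - R * X * (l + m) + R ^ 2 * D * l * m) := by
  ring

/-- The ratio `λ₃` is positive, the affine form `X - R D λ` is positive there, and `λ₃` is a
critical point of `λ (RN - R λ) / (X - R D λ)`. -/
theorem lam3_facts (X Y D R RN lam3 : ℝ) (hX : 0 < X) (hY : 0 < Y) (hR : 0 < R)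
    (hRN : 0 < RN) (hXY : X - Y = RN * D) (hDne : D ≠ 0)
    (hlam3 : lam3 = Real.sqrt X * (Real.sqrt X - Real.sqrt Y) / (R * D)) :
    0 < lam3 ∧ 0 < X - R * D * lam3 ∧
      RN * X - 2 * R * X * lam3 + R ^ 2 * D * lam3 ^ 2 = 0 := by
  have hs : 0 < Real.sqrt X := Real.sqrt_pos.2 hX
  have ht : 0 < Real.sqrt Y := Real.sqrt_pos.2 hY
  have hsX : Real.sqrt X ^ 2 = X := Real.sq_sqrt hX.le
  have htY : Real.sqrt Y ^ 2 = Y := Real.sq_sqrt hY.le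
  generalize Real.sqrt X = s at *
  generalize Real.sqrt Y = t at *
  have h1 : R * D * lam3 = s * (s - t) := by
    rw [hlam3]; field_simp
  have h2 : R * lam3 * (s + t) = s * RN := by
    apply mul_left_cancel₀ hDne
    linear_combination (s + t) * h1 + s * hsX - s * htY + s * hXY
  refine ⟨?_, ?_, ?_⟩
  · have h3 : 0 < lam3 * (R * (s + t)) := by
      have : 0 < s * RN := by positivity
      linarith
    exact pos_of_mul_pos_left h3 (by positivity)
  · have : 0 < s * t := by positivity
    linarith
  · linear_combination (R * lam3) * h1 - s * h2 + (2 * R * lam3 - RN) * hsX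


/-- Theorem 1 (case `η·σb²·A ≠ σ²`): `λ* = min{λ₃, 1}` is an optimal power splitting
ratio: `λ* ∈ [0,1]` and `J(λ*) ≥ J(λ)` for every `λ ∈ [0,1]`. -/
theorem optimal_power_splitting_ratio_D_ne_zero
    (η P A B σ2 σa2 σb2 R RN : ℝ) (n : ℕ)
    (hη : 0 < η) (hP : 0 < P) (hA : 0 < A) (hB : 0 < B)
    (hσ2 : 0 < σ2) (hσa2 : 0 < σa2) (hσb2 : 0 < σb2)
    (hR : 0 < R) (hRN : 0 < RN) (hRle : R ≤ RN) (hn : 0 < n)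
    (X Y D : ℝ)
    (hX : X = η * σb2 * A * RN + n * σ2 * σb2)
    (hY : Y = σ2 * RN + n * σ2 * σb2)
    (hD : D = η * σb2 * A - σ2) (hDne : D ≠ 0)
    (lam3 lamStar : ℝ)
    (hlam3 : lam3 = Real.sqrt X * (Real.sqrt X - Real.sqrt Y) / (R * D))
    (hlamStar : lamStar = min lam3 1) :
    lamStar ∈ Set.Icc (0 : ℝ) 1 ∧
    ∀ lam ∈ Set.Icc (0 : ℝ) 1,
      η * P * B * lam * (RN - R * lam) /
          (η * A * (lam * σa2 + σb2) * (RN - R * lam) + σ2 * (R * lam + n * σb2)) ≤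
        η * P * B * lamStar * (RN - R * lamStar) /
          (η * A * (lamStar * σa2 + σb2) * (RN - R * lamStar) +
            σ2 * (R * lamStar + n * σb2)) := by
  have hn' : (0 : ℝ) < n := Nat.cast_pos.2 hn
  have hXpos : 0 < X := by rw [hX]; positivity
  have hYpos : 0 < Y := by rw [hY]; positivity
  obtain ⟨hl3, hg3, hcrit⟩ := lam3_facts X Y D R RN lam3 hXpos hYpos hR hRN
    (by rw [hX, hY, hD]; ring) hDne hlam3
  have hmem : lamStar ∈ Set.Icc (0 : ℝ) 1 := by
    rw [hlamStar]
    exact ⟨le_min hl3.le zero_le_one, min_le_right _ _⟩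
  have hf : ∀ l ∈ Set.Icc (0 : ℝ) 1, 0 ≤ RN - R * l := by
    rintro l ⟨_, h1⟩
    nlinarith
  have hg : ∀ l ∈ Set.Icc (0 : ℝ) 1, 0 < X - R * D * l := by
    intro l hl
    have e : X - R * D * l = η * A * σb2 * (RN - R * l) + σ2 * (R * l + n * σb2) := by
      rw [hX, hD]; ring
    have h0 := hl.1
    have h1 := hf l hl
    rw [e]; positivity
  have hden : ∀ l ∈ Set.Icc (0 : ℝ) 1,
      0 < η * A * (l * σa2 + σb2) * (RN - R * l) + σ2 * (R * l + n * σb2) := by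
    intro l hl
    have h0 := hl.1
    have h1 := hf l hl
    positivity
  refine ⟨hmem, fun lam hlam => ?_⟩
  have key : lam * (RN - R * lam) * (X - R * D * lamStar) ≤
      lamStar * (RN - R * lamStar) * (X - R * D * lam) := by
    rw [← sub_nonpos, cross_identity]
    rcases le_total lam3 1 with h | h
    · rw [hlamStar, min_eq_left h]
      have e : (lam - lam3) * (RN * X - R * X * (lam + lam3) + R ^ 2 * D * lam * lam3) =
          -((lam - lam3) ^ 2 * (R * (X - R * D * lam3))) := by
        linear_combination (lam - lam3) * hcrit
      rw [e, neg_nonpos]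
      positivity
    · rw [hlamStar, min_eq_right h]
      have hg1 := hg 1 ⟨zero_le_one, le_rfl⟩
      have h1 : 0 ≤ 1 - lam := sub_nonneg.2 hlam.2
      have h3 : 0 ≤ lam3 - 1 := sub_nonneg.2 h
      -- `h lam 1 = (h lam 1 - h 1 1) + (h 1 1 - h λ₃ λ₃)`, both differences being nonnegative.
      have e : RN * X - R * X * (lam + 1) + R ^ 2 * D * lam * 1 =
          (1 - lam) * (R * (X - R * D * 1)) +
            (lam3 - 1) * (R * ((X - R * D * 1) + (X - R * D * lam3))) := by
        linear_combination hcrit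
      rw [e]
      exact mul_nonpos_of_nonpos_of_nonneg (by linarith) (by positivity)
  rw [div_le_div_iff₀ (hden lam hlam) (hden lamStar hmem)]
  have hK : 0 ≤ η * P * B := by positivity
  have := mul_le_mul_of_nonneg_left key hK
  rw [hX, hD] at this
  -- The products of `f lam` and `f lamStar` cancel from the two sides.
  linarith
end

section
/- (Theorem 1, case η·σb²·A = σ².) Let η, P, A, B, σ², σa², σb², R, R_N be positive real numbers with R ≤ R_N, and let n be a positive integer. Suppose η·σb²·A = σ². Then λ* = min{R_N/(2R), 1} satisfies λ* ∈ [0,1] and J(λ*) ≥ J(λ) for every λ ∈ [0,1]; i.e., λ* is an optimal power splitting ratio. -/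
/-!
Write `g x = x (RN - R x)`. Since `η σb2 A = σ2`, the terms linear in `x` cancel in the denominator
of `J`, which becomes `η A σa2 · g x + (σ2 RN + σ2 n σb2)`. Hence `J` is of the form
`c g / (a g + k)` with `c, a, k > 0`, an increasing function of `g ≥ 0`, and it suffices to maximise
the concave quadratic `g` on `[0, 1]`: the maximiser is its vertex `RN / (2R)` truncated at `1`.
-/

/-- The vertex of `x (RN - R x)`, truncated at `1`, maximises this quadratic on `(-∞, 1]`. -/
lemma quadratic_le_at_truncated_vertex {R RN x : ℝ} (hR : 0 < R) (hx : x ≤ 1) :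
    x * (RN - R * x) ≤ min (RN / (2 * R)) 1 * (RN - R * min (RN / (2 * R)) 1) := by
  rcases le_total (RN / (2 * R)) 1 with h | h
  · rw [min_eq_left h]
    have hv : RN = 2 * R * (RN / (2 * R)) := by field_simp
    set v := RN / (2 * R)
    rw [hv]
    nlinarith [mul_nonneg hR.le (sq_nonneg (x - v))]
  · rw [min_eq_right h]
    rw [le_div_iff₀ (by positivity)] at h
    -- The difference of the two sides is `(1 - x) (RN - R (1 + x))`.
    have h2 : 0 ≤ RN - R * (1 + x) := by nlinarith
    nlinarith [mul_nonneg (sub_nonneg.2 hx) h2]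

/-- `t ↦ c t / (a t + k)` is monotone on `[0, ∞)`. -/
lemma mul_div_affine_mono {c a k s t : ℝ} (hc : 0 < c) (ha : 0 < a) (hk : 0 < k)
    (hs : 0 ≤ s) (hst : s ≤ t) : c * s / (a * s + k) ≤ c * t / (a * t + k) := by
  have ht : 0 ≤ t := hs.trans hst
  rw [div_le_div_iff₀ (by positivity) (by positivity)]
  nlinarith [mul_le_mul_of_nonneg_left hst (mul_pos hc hk).le]


/-- Theorem 1 (case `η·σb²·A = σ²`): `λ* = min{R_N/(2R), 1}` is an optimal power
splitting ratio: `λ* ∈ [0,1]` and `J(λ*) ≥ J(λ)` for every `λ ∈ [0,1]`. -/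
theorem optimal_power_splitting_ratio_D_eq_zero
    (η P A B σ2 σa2 σb2 R RN : ℝ) (n : ℕ)
    (hη : 0 < η) (hP : 0 < P) (hA : 0 < A) (hB : 0 < B)
    (hσ2 : 0 < σ2) (hσa2 : 0 < σa2) (hσb2 : 0 < σb2)
    (hR : 0 < R) (hRN : 0 < RN) (hRle : R ≤ RN) (hn : 0 < n)
    (hDeq : η * σb2 * A = σ2)
    (lamStar : ℝ) (hlamStar : lamStar = min (RN / (2 * R)) 1) :
    lamStar ∈ Set.Icc (0 : ℝ) 1 ∧
    ∀ lam ∈ Set.Icc (0 : ℝ) 1,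
      η * P * B * lam * (RN - R * lam) /
          (η * A * (lam * σa2 + σb2) * (RN - R * lam) + σ2 * (R * lam + n * σb2)) ≤
        η * P * B * lamStar * (RN - R * lamStar) /
          (η * A * (lamStar * σa2 + σb2) * (RN - R * lamStar) +
            σ2 * (R * lamStar + n * σb2)) := by
  have hmem : lamStar ∈ Set.Icc (0 : ℝ) 1 := by
    rw [hlamStar]
    exact ⟨le_min (by positivity) zero_le_one, min_le_right _ _⟩
  refine ⟨hmem, fun lam hlam => ?_⟩
  have hJ : ∀ x : ℝ, η * P * B * x * (RN - R * x) /
        (η * A * (x * σa2 + σb2) * (RN - R * x) + σ2 * (R * x + n * σb2)) =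
      η * P * B * (x * (RN - R * x)) /
        (η * A * σa2 * (x * (RN - R * x)) + (σ2 * RN + σ2 * (n * σb2))) := by
    intro x
    rw [← hDeq]
    congr 1 <;> ring
  rw [hJ, hJ]
  have hg : 0 ≤ lam * (RN - R * lam) :=
    mul_nonneg hlam.1 (by nlinarith [mul_le_mul_of_nonneg_left hlam.2 hR.le])
  refine mul_div_affine_mono (by positivity) (by positivity) (by positivity) hg ?_
  rw [hlamStar]
  exact quadratic_le_at_truncated_vertex hR hlam.2
end

section
/- Let η, P, A, B, σ², σa², σb², R, R_N be positive real numbers with R ≤ R_N, and let n be a positive integer. Suppose η·σb²·A = σ², and set X = η·σb²·A·R_N + n·σ²·σb². Then for every λ ∈ (0,1), the derivative of J at λ equals η·P·B·X·(R_N − 2·R·λ) / [η·A·(λ·σa² + σb²)·(R_N − R·λ) + σ²·(R·λ + n·σb²)]²; consequently J is nondecreasing on [0,1] ∩ [0, R_N/(2R)] and nonincreasing on [R_N/(2R), 1] ∩ [0,1]. -/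
/-!
Write `u(l) = l (R_N - R l)`. When `η σb² A = σ²`, the terms of the denominator that are linear in
`l` and do not involve `σa²` cancel, so the denominator equals `c u(l) + X` with `c = η A σa²`, and
`J = k u / (c u + X)` with `k = η P B`. The map `u ↦ k u / (c u + X)` is increasing on `u ≥ 0`
with derivative `k X / (c u + X)²`. The derivative of `J` is then the chain rule with
`u' = R_N - 2 R l`, and the monotonicity of `J` is that of the parabola `u`, whose vertex
is `R_N / (2R)`. Composing monotone maps also covers the endpoints `0` and `1` directly.
-/

lemma ratio_le_ratio {k c X u v : ℝ} (hk : 0 ≤ k) (hc : 0 ≤ c) (hX : 0 < X)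
    (hu : 0 ≤ u) (huv : u ≤ v) : k * u / (c * u + X) ≤ k * v / (c * v + X) := by
  have hv := hu.trans huv
  rw [div_le_div_iff₀ (by positivity) (by positivity)]
  nlinarith [mul_nonneg (mul_nonneg hk hX.le) (sub_nonneg.2 huv)]


/-- In the case `η·σb²·A = σ²`, for every `λ ∈ (0,1)` the derivative of `J` at `λ`
equals `η·P·B·X·(R_N − 2·R·λ) / [denominator]²`; consequently `J` is nondecreasing on
`[0,1] ∩ [0, R_N/(2R)]` and nonincreasing on `[R_N/(2R), 1] ∩ [0,1]`. -/
theorem snr_deriv_and_monotone_D_eq_zero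
    (η P A B σ2 σa2 σb2 R RN : ℝ) (n : ℕ)
    (hη : 0 < η) (hP : 0 < P) (hA : 0 < A) (hB : 0 < B)
    (hσ2 : 0 < σ2) (hσa2 : 0 < σa2) (hσb2 : 0 < σb2)
    (hR : 0 < R) (hRN : 0 < RN) (hRle : R ≤ RN) (hn : 0 < n)
    (hDeq : η * σb2 * A = σ2)
    (X : ℝ) (hX : X = η * σb2 * A * RN + n * σ2 * σb2) :
    (∀ lam ∈ Set.Ioo (0 : ℝ) 1,
      HasDerivAt
        (fun l : ℝ =>
          η * P * B * l * (RN - R * l) /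
            (η * A * (l * σa2 + σb2) * (RN - R * l) + σ2 * (R * l + n * σb2)))
        (η * P * B * X * (RN - 2 * R * lam) /
          (η * A * (lam * σa2 + σb2) * (RN - R * lam) + σ2 * (R * lam + n * σb2)) ^ 2)
        lam) ∧
    MonotoneOn
      (fun lam : ℝ =>
        η * P * B * lam * (RN - R * lam) /
          (η * A * (lam * σa2 + σb2) * (RN - R * lam) + σ2 * (R * lam + n * σb2)))
      (Set.Icc (0 : ℝ) 1 ∩ Set.Icc (0 : ℝ) (RN / (2 * R))) ∧
    AntitoneOn
      (fun lam : ℝ =>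
        η * P * B * lam * (RN - R * lam) /
          (η * A * (lam * σa2 + σb2) * (RN - R * lam) + σ2 * (R * lam + n * σb2)))
      (Set.Icc (RN / (2 * R)) 1 ∩ Set.Icc (0 : ℝ) 1) := by
  have hXpos : 0 < X := by rw [hX]; positivity
  have hden : ∀ l : ℝ,
      η * A * (l * σa2 + σb2) * (RN - R * l) + σ2 * (R * l + n * σb2)
        = η * A * σa2 * (l * (RN - R * l)) + X := by
    intro l
    rw [hX, ← hDeq]
    ring
  have hnum : ∀ l : ℝ, η * P * B * l * (RN - R * l) = η * P * B * (l * (RN - R * l)) :=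
    fun l => mul_assoc _ _ _
  have hu : ∀ l ∈ Set.Icc (0 : ℝ) 1, 0 ≤ l * (RN - R * l) := by
    intro l hl
    refine mul_nonneg hl.1 (sub_nonneg.2 ?_)
    exact (mul_le_of_le_one_right hR.le hl.2).trans hRle
  have hk : 0 < η * P * B := by positivity
  have hc : 0 < η * A * σa2 := by positivity
  have h2R : 0 < 2 * R := by positivity
  simp only [hden, hnum]
  refine ⟨?_, ?_, ?_⟩
  · intro l hl
    have hne : η * A * σa2 * (l * (RN - R * l)) + X ≠ 0 := by
      have := hu l (Set.Ioo_subset_Icc_self hl)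
      positivity
    have hd : HasDerivAt (fun x : ℝ => x * (RN - R * x)) (RN - 2 * R * l) l := by
      refine ((hasDerivAt_id' l).mul
        (((hasDerivAt_id' l).const_mul R).const_sub RN)).congr_deriv ?_
      ring
    refine ((hd.const_mul (η * P * B)).div
      ((hd.const_mul (η * A * σa2)).add_const X) hne).congr_deriv ?_
    congr 1
    ring
  · rintro x ⟨hx, -⟩ y ⟨-, hy⟩ hxy
    refine ratio_le_ratio hk.le hc.le hXpos (hu x hx) ?_
    have hy' := (le_div_iff₀ h2R).1 hy.2
    -- `u y - u x = (y - x) (R_N - R (x + y))`, and `x + y ≤ 2 y ≤ R_N / R`.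
    have h : 0 ≤ RN - R * (x + y) := by
      nlinarith [mul_le_mul_of_nonneg_left hxy hR.le]
    nlinarith [mul_nonneg (sub_nonneg.2 hxy) h]
  · rintro x ⟨hx, -⟩ y ⟨-, hy⟩ hxy
    refine ratio_le_ratio hk.le hc.le hXpos (hu y hy) ?_
    have hx' := (div_le_iff₀ h2R).1 hx.1
    have h : 0 ≤ R * (x + y) - RN := by
      nlinarith [mul_le_mul_of_nonneg_left hxy hR.le]
    nlinarith [mul_nonneg (sub_nonneg.2 hxy) h]
end
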